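/- Let A ∈ ℝ^{n×n}, B ∈ ℝ^{n×m}, C ∈ ℝ^{m×n}, D ∈ ℝ^{m×m}. The primal LMI is infeasible if and only if the dual LMI is feasible. That is: there exist no positive definite P ∈ S^n and no Π ∈ Π_NN making [[P A + A^T P, P B],[B^T P, 0]] + [[C, D],[0, I_m]]^T Π [[C, D],[0, I_m]] negative definite, if and only if there exists a nonzero positive semidefinite H = [[H11, H12],[H12^T, H22]] ∈ S^{n+m} such that A H11 + B H12^T + (A H11 + B H12^T)^T is positive semidefinite, the matrix [[-C, I_m − D],[0, I_m]] H [[-C, I_m − D],[0, I_m]]^T has all entries nonnegative, and every diagonal entry of −C H12 + (I_m − D) H22 is zero. -/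

import Mathlib

open Matrix

/-- The block matrix `E = [[-I, I],[0, I]]`. -/
def Emat (m : ℕ) : Matrix (Fin m ⊕ Fin m) (Fin m ⊕ Fin m) ℝ :=
  fromBlocks (-1) 1 0 1

/-- The block matrix `𝒥(J) = [[0, J],[J, 0]]`. -/
def calJ {m : ℕ} (J : Matrix (Fin m) (Fin m) ℝ) : Matrix (Fin m ⊕ Fin m) (Fin m ⊕ Fin m) ℝ :=
  fromBlocks 0 J J 0

/-- The multiplier class `Π_NN`. -/
def PiNN (m : ℕ) : Set (Matrix (Fin m ⊕ Fin m) (Fin m ⊕ Fin m) ℝ) :=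
  {P | ∃ (Q : Matrix (Fin m ⊕ Fin m) (Fin m ⊕ Fin m) ℝ) (J : Matrix (Fin m) (Fin m) ℝ),
    J.IsDiag ∧ Q.IsSymm ∧ (∀ i j, 0 ≤ Q i j) ∧ P = (Emat m)ᵀ * (Q + calJ J) * Emat m}


section Helpers

variable {ι : Type*} [Fintype ι]

/-- The trace pairing of a nonzero PSD matrix with a positive definite one is positive. -/
theorem trace_mul_pos_aux {H N : Matrix ι ι ℝ} (hH : H.PosSemidef) (h0 : H ≠ 0)
    (hN : N.PosDef) : 0 < (H * N).trace := by
  obtain ⟨k, v, rfl⟩ := Matrix.posSemidef_iff_eq_sum_vecMulVec.mp hH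
  have key : ∀ i, (vecMulVec (v i) (star (v i)) * N).trace = star (v i) ⬝ᵥ (N *ᵥ v i) := by
    intro i
    rw [Matrix.trace_mul_comm, Matrix.mul_vecMulVec, Matrix.trace_vecMulVec, dotProduct_comm]
  rw [Finset.sum_mul, Matrix.trace_sum]
  simp only [key]
  have hex : ∃ i, v i ≠ 0 := by
    by_contra hcon
    push Not at hcon
    exact h0 (by simp [hcon])
  obtain ⟨i, hi⟩ := hex
  exact Finset.sum_pos' (fun j _ => hN.posSemidef.dotProduct_mulVec_nonneg _)
    ⟨i, Finset.mem_univ _, hN.dotProduct_mulVec_pos hi⟩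

theorem trace_mul_nonneg_aux {H N : Matrix ι ι ℝ} (hH : H.PosSemidef)
    (hN : N.PosDef) : 0 ≤ (H * N).trace := by
  by_cases h0 : H = 0
  · simp [h0]
  · exact (trace_mul_pos_aux hH h0 hN).le

/-- If `0 ≤ a + t * b` for all positive `t`, then `0 ≤ b`. -/
theorem slope_nonneg_aux {a b : ℝ} (h : ∀ t : ℝ, 0 < t → 0 ≤ a + t * b) : 0 ≤ b := by
  by_contra hb
  push Not at hb
  have h1 := h ((|a| + 1) / (-b)) (div_pos (by positivity) (by linarith))
  have h2 : (|a| + 1) / (-b) * b = -(|a| + 1) := by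
    rw [div_mul_eq_mul_div, div_neg, mul_div_cancel_right₀ _ hb.ne]
  rw [h2] at h1
  linarith [le_abs_self a]

theorem posSemidef_of_trace_aux [DecidableEq ι] {X : Matrix ι ι ℝ} (hX : Xᵀ = X)
    (h : ∀ P : Matrix ι ι ℝ, P.PosDef → 0 ≤ (X * P).trace) : X.PosSemidef := by
  refine Matrix.PosSemidef.of_dotProduct_mulVec_nonneg
    (by rw [Matrix.IsHermitian, conjTranspose_eq_transpose_of_trivial, hX]) fun x => ?_
  refine slope_nonneg_aux (a := X.trace) fun t ht => ?_
  have h1 := h (1 + t • vecMulVec x (star x))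
    (Matrix.PosDef.one.add_posSemidef ((posSemidef_vecMulVec_self_star x).smul ht.le))
  rwa [mul_add, mul_one, Matrix.trace_add, Matrix.mul_smul, Matrix.trace_smul,
    Matrix.mul_vecMulVec, Matrix.trace_vecMulVec, dotProduct_comm, smul_eq_mul] at h1

theorem isOpen_neg_aux : IsOpen {M : Matrix ι ι ℝ | ∀ x : ι → ℝ, x ≠ 0 → x ⬝ᵥ (M *ᵥ x) < 0} := by
  have heq : {M : Matrix ι ι ℝ | ∀ x : ι → ℝ, x ≠ 0 → x ⬝ᵥ (M *ᵥ x) < 0}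
      = {M | ∀ x ∈ Metric.sphere (0 : ι → ℝ) 1, x ⬝ᵥ (M *ᵥ x) < 0} := by
    ext M
    constructor
    · intro h x hx
      refine h x ?_
      rintro rfl
      simp at hx
    · intro h x hx
      have hn : 0 < ‖x‖ := norm_pos_iff.mpr hx
      have h1 := h (‖x‖⁻¹ • x) (by simp [norm_smul, hn.ne'])
      rw [Matrix.mulVec_smul, dotProduct_smul, smul_dotProduct, smul_eq_mul, smul_eq_mul] at h1
      by_contra hc
      push Not at hc
      have : 0 ≤ ‖x‖⁻¹ * (‖x‖⁻¹ * x ⬝ᵥ (M *ᵥ x)) := by positivity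
      linarith
  rw [heq, isOpen_iff_mem_nhds]
  intro M hM
  refine (isCompact_sphere (0 : ι → ℝ) 1).eventually_forall_of_forall_eventually
    (P := fun (M : Matrix ι ι ℝ) x => x ⬝ᵥ (M *ᵥ x) < 0) fun x hx => ?_
  have hc : Continuous fun z : Matrix ι ι ℝ × (ι → ℝ) => z.2 ⬝ᵥ (z.1 *ᵥ z.2) := by
    fun_prop
  exact hc.continuousAt.eventually (gt_mem_nhds (hM x hx))

theorem convex_neg_aux :
    Convex ℝ {M : Matrix ι ι ℝ | ∀ x : ι → ℝ, x ≠ 0 → x ⬝ᵥ (M *ᵥ x) < 0} := by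
  intro M hM N hN a b ha hb hab x hx
  rw [Matrix.add_mulVec, Matrix.smul_mulVec, Matrix.smul_mulVec, dotProduct_add, dotProduct_smul,
    dotProduct_smul, smul_eq_mul, smul_eq_mul]
  have h1 := hM x hx
  have h2 := hN x hx
  rcases ha.eq_or_lt with rfl | ha
  · have : b = 1 := by linarith
    subst this
    linarith
  · nlinarith [mul_pos_of_neg_of_neg h1 (neg_neg_of_pos ha), mul_nonneg hb (neg_pos.mpr h2).le]

/-- Separation of a convex cone of symmetric matrices from the negative definite ones. -/
theorem separation_aux [DecidableEq ι] (t : Set (Matrix ι ι ℝ)) (htc : Convex ℝ t)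
    (hne : t.Nonempty) (hts : ∀ L ∈ t, Lᵀ = L) (hsm : ∀ L ∈ t, ∀ c : ℝ, 0 < c → c • L ∈ t)
    (hno : ∀ L ∈ t, ¬ (-L).PosDef) :
    ∃ H : Matrix ι ι ℝ, H.PosSemidef ∧ H ≠ 0 ∧ ∀ L ∈ t, 0 ≤ (H * L).trace := by
  have hdisj : Disjoint {M : Matrix ι ι ℝ | ∀ x : ι → ℝ, x ≠ 0 → x ⬝ᵥ (M *ᵥ x) < 0} t := by
    rw [Set.disjoint_left]
    intro L hL hLt
    refine hno L hLt (Matrix.PosDef.of_dotProduct_mulVec_pos ?_ fun x hx => ?_)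
    · rw [Matrix.IsHermitian, conjTranspose_eq_transpose_of_trivial, transpose_neg, hts L hLt]
    · have := hL x hx
      rw [Matrix.neg_mulVec, dotProduct_neg, star_trivial]
      linarith
  obtain ⟨f, u, hf1, hf2⟩ := geometric_hahn_banach_open convex_neg_aux isOpen_neg_aux htc hdisj
  let K : Matrix ι ι ℝ := Matrix.of fun i j => f (Matrix.single i j 1)
  have hfK : ∀ M, f M = (Kᵀ * M).trace := by
    intro M
    conv_lhs => rw [Matrix.matrix_eq_sum_single M]
    simp only [map_sum, Matrix.trace, Matrix.diag, Matrix.mul_apply, Matrix.transpose_apply]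
    rw [Finset.sum_comm]
    refine Finset.sum_congr rfl fun i _ => Finset.sum_congr rfl fun j _ => ?_
    have : Matrix.single j i (M j i) = (M j i) • Matrix.single j i (1 : ℝ) := by
      rw [Matrix.smul_single, smul_eq_mul, mul_one]
    rw [this, map_smul, smul_eq_mul, mul_comm]
    rfl
  have hfH : ∀ M : Matrix ι ι ℝ, Mᵀ = M → ((K + Kᵀ) * M).trace = 2 * f M := by
    intro M hM
    rw [add_mul, Matrix.trace_add, hfK M, ← Matrix.trace_transpose (K * M), transpose_mul, hM,
      Matrix.trace_mul_comm M]
    ring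
  have hu : u ≤ 0 := by
    obtain ⟨L, hL⟩ := hne
    have h : ∀ c : ℝ, 0 < c → u ≤ c * f L := fun c hc => by
      simpa using hf2 _ (hsm L hL c hc)
    by_contra hu
    push Not at hu
    have h1 := h (u / (2 * (|f L| + 1))) (by positivity)
    have h2 : u / (2 * (|f L| + 1)) * f L ≤ u / (2 * (|f L| + 1)) * (|f L| + 1) := by
      gcongr
      linarith [le_abs_self (f L)]
    have h3 : u / (2 * (|f L| + 1)) * (|f L| + 1) = u / 2 := by
      field_simp
    linarith
  have hneg : ∀ N : Matrix ι ι ℝ, N.PosDef → 0 < f N := by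
    intro N hN
    have := hf1 (-N) (fun x hx => by
      rw [Matrix.neg_mulVec, dotProduct_neg]
      have := hN.dotProduct_mulVec_pos hx
      rw [star_trivial] at this
      linarith)
    rw [map_neg] at this
    linarith
  have hcone : ∀ L ∈ t, 0 ≤ f L := fun L hL => by
    refine slope_nonneg_aux (a := -u) fun c hc => ?_
    have := hf2 _ (hsm L hL c hc)
    rw [map_smul, smul_eq_mul] at this
    linarith
  have symm_of : ∀ N : Matrix ι ι ℝ, N.PosDef → Nᵀ = N := fun N hN => by
    have := hN.isHermitian
    rwa [Matrix.IsHermitian, conjTranspose_eq_transpose_of_trivial] at this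
  refine ⟨K + Kᵀ, posSemidef_of_trace_aux (by simp [add_comm]) fun P hP => ?_, ?_, fun L hL => ?_⟩
  · rw [hfH P (symm_of P hP)]
    linarith [hneg P hP]
  · intro h0
    have h1 := hfH 1 (by simp)
    rw [h0] at h1
    have h2 := hneg 1 Matrix.PosDef.one
    simp at h1
    linarith
  · rw [hfH L (hts L hL)]
    linarith [hcone L hL]

end Helpers

section LMI

variable {n m : ℕ}

/-- The matrix of the primal LMI. -/
def Lmat (A : Matrix (Fin n) (Fin n) ℝ) (B : Matrix (Fin n) (Fin m) ℝ)
    (C : Matrix (Fin m) (Fin n) ℝ) (D : Matrix (Fin m) (Fin m) ℝ)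
    (P : Matrix (Fin n) (Fin n) ℝ) (R : Matrix (Fin m ⊕ Fin m) (Fin m ⊕ Fin m) ℝ) :
    Matrix (Fin n ⊕ Fin m) (Fin n ⊕ Fin m) ℝ :=
  fromBlocks (P * A + Aᵀ * P) (P * B) (Bᵀ * P) 0 +
    (fromBlocks (-C) (1 - D) 0 (1 : Matrix (Fin m) (Fin m) ℝ))ᵀ * R *
      fromBlocks (-C) (1 - D) 0 (1 : Matrix (Fin m) (Fin m) ℝ)

theorem Lmat_eq (A : Matrix (Fin n) (Fin n) ℝ) (B : Matrix (Fin n) (Fin m) ℝ)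
    (C : Matrix (Fin m) (Fin n) ℝ) (D : Matrix (Fin m) (Fin m) ℝ)
    (P : Matrix (Fin n) (Fin n) ℝ) (R : Matrix (Fin m ⊕ Fin m) (Fin m ⊕ Fin m) ℝ) :
    fromBlocks (P * A + Aᵀ * P) (P * B) (Bᵀ * P) 0 +
      (fromBlocks C D 0 (1 : Matrix (Fin m) (Fin m) ℝ))ᵀ * ((Emat m)ᵀ * R * Emat m) *
      fromBlocks C D 0 (1 : Matrix (Fin m) (Fin m) ℝ) = Lmat A B C D P R := by
  have hE : Emat m * fromBlocks C D 0 (1 : Matrix (Fin m) (Fin m) ℝ)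
      = fromBlocks (-C) (1 - D) 0 (1 : Matrix (Fin m) (Fin m) ℝ) := by
    rw [Emat, fromBlocks_multiply]
    simp [sub_eq_add_neg, add_comm]
  rw [Lmat, ← hE, transpose_mul]
  simp only [Matrix.mul_assoc]

theorem trace_fromBlocks_aux (A : Matrix (Fin n) (Fin n) ℝ) (B : Matrix (Fin n) (Fin m) ℝ)
    (C : Matrix (Fin m) (Fin n) ℝ) (D : Matrix (Fin m) (Fin m) ℝ) :
    (fromBlocks A B C D).trace = A.trace + D.trace := by
  simp [Matrix.trace, Fintype.sum_sum_type]

theorem trace_Lmat (A : Matrix (Fin n) (Fin n) ℝ) (B : Matrix (Fin n) (Fin m) ℝ)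
    (C : Matrix (Fin m) (Fin n) ℝ) (D : Matrix (Fin m) (Fin m) ℝ)
    (P : Matrix (Fin n) (Fin n) ℝ) (R : Matrix (Fin m ⊕ Fin m) (Fin m ⊕ Fin m) ℝ)
    (H11 : Matrix (Fin n) (Fin n) ℝ) (H12 : Matrix (Fin n) (Fin m) ℝ)
    (H22 : Matrix (Fin m) (Fin m) ℝ) (h11 : H11ᵀ = H11) :
    (fromBlocks H11 H12 H12ᵀ H22 * Lmat A B C D P R).trace =
      ((A * H11 + B * H12ᵀ + (A * H11 + B * H12ᵀ)ᵀ) * P).trace +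
      ((fromBlocks (-C) (1 - D) 0 (1 : Matrix (Fin m) (Fin m) ℝ) *
            fromBlocks H11 H12 H12ᵀ H22 *
            (fromBlocks (-C) (1 - D) 0 (1 : Matrix (Fin m) (Fin m) ℝ))ᵀ) * R).trace := by
  rw [Lmat, mul_add, Matrix.trace_add]
  congr 1
  · rw [fromBlocks_multiply, trace_fromBlocks_aux]
    simp only [transpose_add, transpose_mul, transpose_transpose, h11, add_mul, mul_add,
      Matrix.trace_add, mul_zero, add_zero, Matrix.mul_assoc]
    rw [Matrix.trace_mul_comm A, Matrix.trace_mul_comm B]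
    simp only [Matrix.mul_assoc]
    ring
  · generalize fromBlocks (-C) (1 - D) 0 (1 : Matrix (Fin m) (Fin m) ℝ) = G
    simp only [Matrix.mul_assoc]
    rw [Matrix.trace_mul_comm G]
    simp only [Matrix.mul_assoc]

theorem trace_calJ (W : Matrix (Fin m ⊕ Fin m) (Fin m ⊕ Fin m) ℝ) (hW : Wᵀ = W)
    (d : Fin m → ℝ) :
    (W * calJ (diagonal d)).trace = 2 * ∑ i, W (Sum.inl i) (Sum.inr i) * d i := by
  have h : ∀ i, W (Sum.inr i) (Sum.inl i) = W (Sum.inl i) (Sum.inr i) := fun i => by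
    conv_lhs => rw [← hW]
    rfl
  simp [Matrix.trace, calJ, Matrix.mul_apply, Fintype.sum_sum_type, diagonal_apply, h]
  ring

theorem G_block (C : Matrix (Fin m) (Fin n) ℝ) (D : Matrix (Fin m) (Fin m) ℝ)
    (H11 : Matrix (Fin n) (Fin n) ℝ) (H12 : Matrix (Fin n) (Fin m) ℝ)
    (H22 : Matrix (Fin m) (Fin m) ℝ) (i : Fin m) :
    (fromBlocks (-C) (1 - D) 0 (1 : Matrix (Fin m) (Fin m) ℝ) *
            fromBlocks H11 H12 H12ᵀ H22 *
            (fromBlocks (-C) (1 - D) 0 (1 : Matrix (Fin m) (Fin m) ℝ))ᵀ) (Sum.inl i) (Sum.inr i) =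
    ((-C) * H12 + (1 - D) * H22 : Matrix (Fin m) (Fin m) ℝ) i i := by
  rw [fromBlocks_transpose, fromBlocks_multiply, fromBlocks_multiply, fromBlocks_apply₁₂]
  simp

theorem Lmat_transpose (A : Matrix (Fin n) (Fin n) ℝ) (B : Matrix (Fin n) (Fin m) ℝ)
    (C : Matrix (Fin m) (Fin n) ℝ) (D : Matrix (Fin m) (Fin m) ℝ)
    (P : Matrix (Fin n) (Fin n) ℝ) (R : Matrix (Fin m ⊕ Fin m) (Fin m ⊕ Fin m) ℝ)
    (hP : Pᵀ = P) (hR : Rᵀ = R) : (Lmat A B C D P R)ᵀ = Lmat A B C D P R := by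
  rw [Lmat, transpose_add]
  congr 1
  · rw [fromBlocks_transpose]
    simp [transpose_mul, hP, add_comm]
  · generalize fromBlocks (-C) (1 - D) 0 (1 : Matrix (Fin m) (Fin m) ℝ) = G
    simp [transpose_mul, hR, Matrix.mul_assoc]

theorem Lmat_add (A : Matrix (Fin n) (Fin n) ℝ) (B : Matrix (Fin n) (Fin m) ℝ)
    (C : Matrix (Fin m) (Fin n) ℝ) (D : Matrix (Fin m) (Fin m) ℝ)
    (P P' : Matrix (Fin n) (Fin n) ℝ) (R R' : Matrix (Fin m ⊕ Fin m) (Fin m ⊕ Fin m) ℝ) :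
    Lmat A B C D P R + Lmat A B C D P' R' = Lmat A B C D (P + P') (R + R') := by
  have h : fromBlocks ((P + P') * A + Aᵀ * (P + P')) ((P + P') * B) (Bᵀ * (P + P'))
      (0 : Matrix (Fin m) (Fin m) ℝ) =
      fromBlocks (P * A + Aᵀ * P) (P * B) (Bᵀ * P) 0 +
      fromBlocks (P' * A + Aᵀ * P') (P' * B) (Bᵀ * P') 0 := by
    rw [fromBlocks_add]
    simp only [Matrix.add_mul, Matrix.mul_add, add_zero]
    congr 1
    abel
  unfold Lmat
  rw [h]
  generalize fromBlocks (-C) (1 - D) 0 (1 : Matrix (Fin m) (Fin m) ℝ) = G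
  rw [Matrix.mul_add Gᵀ, Matrix.add_mul (Gᵀ * R)]
  exact add_add_add_comm _ _ _ _

theorem Lmat_smul (A : Matrix (Fin n) (Fin n) ℝ) (B : Matrix (Fin n) (Fin m) ℝ)
    (C : Matrix (Fin m) (Fin n) ℝ) (D : Matrix (Fin m) (Fin m) ℝ) (c : ℝ)
    (P : Matrix (Fin n) (Fin n) ℝ) (R : Matrix (Fin m ⊕ Fin m) (Fin m ⊕ Fin m) ℝ) :
    c • Lmat A B C D P R = Lmat A B C D (c • P) (c • R) := by
  simp [Lmat, fromBlocks_smul, smul_add]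

/-- The cone of admissible middle matrices `Q + 𝒥(J)`. -/
def Rset (m : ℕ) : Set (Matrix (Fin m ⊕ Fin m) (Fin m ⊕ Fin m) ℝ) :=
  {R | ∃ (Q : Matrix (Fin m ⊕ Fin m) (Fin m ⊕ Fin m) ℝ) (J : Matrix (Fin m) (Fin m) ℝ),
    J.IsDiag ∧ Q.IsSymm ∧ (∀ i j, 0 ≤ Q i j) ∧ R = Q + calJ J}

theorem Rset_add {R R' : Matrix (Fin m ⊕ Fin m) (Fin m ⊕ Fin m) ℝ} (h : R ∈ Rset m)
    (h' : R' ∈ Rset m) : R + R' ∈ Rset m := by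
  obtain ⟨Q, J, hJ, hQ, hp, rfl⟩ := h
  obtain ⟨Q', J', hJ', hQ', hp', rfl⟩ := h'
  refine ⟨Q + Q', J + J', hJ.add hJ', hQ.add hQ', fun i j => add_nonneg (hp i j) (hp' i j), ?_⟩
  have : calJ (J + J') = calJ J + calJ J' := by simp [calJ, fromBlocks_add]
  rw [this]
  abel

theorem Rset_smul {R : Matrix (Fin m ⊕ Fin m) (Fin m ⊕ Fin m) ℝ} (h : R ∈ Rset m)
    {c : ℝ} (hc : 0 ≤ c) : c • R ∈ Rset m := by
  obtain ⟨Q, J, hJ, hQ, hp, rfl⟩ := h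
  refine ⟨c • Q, c • J, hJ.smul c, hQ.smul c, fun i j => mul_nonneg hc (hp i j), ?_⟩
  simp [calJ, fromBlocks_smul]

theorem Rset_symm {R : Matrix (Fin m ⊕ Fin m) (Fin m ⊕ Fin m) ℝ} (h : R ∈ Rset m) : Rᵀ = R := by
  obtain ⟨Q, J, hJ, hQ, hp, rfl⟩ := h
  have hJ' : Jᵀ = J := hJ.isSymm
  rw [transpose_add, hQ.eq, calJ, fromBlocks_transpose, hJ']
  simp

theorem Rset_zero : (0 : Matrix (Fin m ⊕ Fin m) (Fin m ⊕ Fin m) ℝ) ∈ Rset m :=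
  ⟨0, 0, isDiag_zero, by simp [Matrix.IsSymm], by simp, by simp [calJ]⟩

end LMI

/-- The primal LMI is infeasible if and only if the dual LMI is feasible. -/
theorem primal_infeasible_iff_dual_feasible {n m : ℕ}
    (A : Matrix (Fin n) (Fin n) ℝ) (B : Matrix (Fin n) (Fin m) ℝ)
    (C : Matrix (Fin m) (Fin n) ℝ) (D : Matrix (Fin m) (Fin m) ℝ) :
    (¬ ∃ (P : Matrix (Fin n) (Fin n) ℝ) (Pi : Matrix (Fin m ⊕ Fin m) (Fin m ⊕ Fin m) ℝ),
        P.PosDef ∧ Pi ∈ PiNN m ∧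
        (-(fromBlocks (P * A + Aᵀ * P) (P * B) (Bᵀ * P) 0 +
            (fromBlocks C D 0 (1 : Matrix (Fin m) (Fin m) ℝ))ᵀ * Pi *
              fromBlocks C D 0 (1 : Matrix (Fin m) (Fin m) ℝ))).PosDef) ↔
    (∃ (H11 : Matrix (Fin n) (Fin n) ℝ) (H12 : Matrix (Fin n) (Fin m) ℝ)
        (H22 : Matrix (Fin m) (Fin m) ℝ),
        (fromBlocks H11 H12 H12ᵀ H22).PosSemidef ∧
        fromBlocks H11 H12 H12ᵀ H22 ≠ 0 ∧
        (A * H11 + B * H12ᵀ + (A * H11 + B * H12ᵀ)ᵀ).PosSemidef ∧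
        (∀ i j, 0 ≤ (fromBlocks (-C) (1 - D) 0 (1 : Matrix (Fin m) (Fin m) ℝ) *
            fromBlocks H11 H12 H12ᵀ H22 *
            (fromBlocks (-C) (1 - D) 0 (1 : Matrix (Fin m) (Fin m) ℝ))ᵀ) i j) ∧
        (∀ i : Fin m, ((-C) * H12 + (1 - D) * H22 : Matrix (Fin m) (Fin m) ℝ) i i = 0)) := by
  constructor
  · intro hno
    obtain ⟨H, hH, hH0, hHL⟩ := separation_aux
      {L | ∃ P R, P.PosDef ∧ R ∈ Rset m ∧ L = Lmat A B C D P R} (by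
        rw [convex_iff_forall_pos]
        rintro _ ⟨P, R, hP, hR, rfl⟩ _ ⟨P', R', hP', hR', rfl⟩ a b ha hb _
        refine ⟨a • P + b • P', a • R + b • R', (hP.smul ha).add (hP'.smul hb),
          Rset_add (Rset_smul hR ha.le) (Rset_smul hR' hb.le), ?_⟩
        rw [Lmat_smul, Lmat_smul, Lmat_add])
      ⟨_, 1, 0, Matrix.PosDef.one, Rset_zero, rfl⟩
      (by
        rintro _ ⟨P, R, hP, hR, rfl⟩
        refine Lmat_transpose A B C D P R ?_ (Rset_symm hR)
        have := hP.isHermitian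
        rwa [Matrix.IsHermitian, conjTranspose_eq_transpose_of_trivial] at this)
      (by
        rintro _ ⟨P, R, hP, hR, rfl⟩ c hc
        exact ⟨c • P, c • R, hP.smul hc, Rset_smul hR hc.le, Lmat_smul ..⟩)
      (by
        rintro _ ⟨P, R, hP, hR, rfl⟩ hpd
        obtain ⟨Q, J, hJ, hQ, hp, rfl⟩ := hR
        refine hno ⟨P, _, hP, ⟨Q, J, hJ, hQ, hp, rfl⟩, ?_⟩
        rw [Lmat_eq]
        exact hpd)
    have hHT : Hᵀ = H := by
      have := hH.isHermitian
      rwa [Matrix.IsHermitian, conjTranspose_eq_transpose_of_trivial] at this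
    have h11 : H.toBlocks₁₁ᵀ = H.toBlocks₁₁ := by
      conv_rhs => rw [← hHT]
      rfl
    have h21 : H.toBlocks₁₂ᵀ = H.toBlocks₂₁ := by
      conv_rhs => rw [← hHT]
      rfl
    have hblk : fromBlocks H.toBlocks₁₁ H.toBlocks₁₂ H.toBlocks₁₂ᵀ H.toBlocks₂₂ = H := by
      rw [h21, fromBlocks_toBlocks]
    have htr : ∀ P R, P.PosDef → R ∈ Rset m →
        0 ≤ (fromBlocks H.toBlocks₁₁ H.toBlocks₁₂ H.toBlocks₁₂ᵀ H.toBlocks₂₂ *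
          Lmat A B C D P R).trace := fun P R hP hR => by
      rw [hblk]
      exact hHL _ ⟨P, R, hP, hR, rfl⟩
    simp only [trace_Lmat A B C D _ _ _ _ _ h11] at htr
    refine ⟨H.toBlocks₁₁, H.toBlocks₁₂, H.toBlocks₂₂, by rwa [hblk], by rwa [hblk], ?_, ?_⟩
    · refine posSemidef_of_trace_aux ?_ fun P hP => ?_
      · rw [transpose_add, transpose_transpose, add_comm]
      · simpa using htr P 0 hP Rset_zero
    · simp only [← G_block C D H.toBlocks₁₁ H.toBlocks₁₂ H.toBlocks₂₂]
      have hWs : (fromBlocks (-C) (1 - D) 0 (1 : Matrix (Fin m) (Fin m) ℝ) *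
            fromBlocks H.toBlocks₁₁ H.toBlocks₁₂ H.toBlocks₁₂ᵀ H.toBlocks₂₂ *
            (fromBlocks (-C) (1 - D) 0 (1 : Matrix (Fin m) (Fin m) ℝ))ᵀ)ᵀ =
            fromBlocks (-C) (1 - D) 0 (1 : Matrix (Fin m) (Fin m) ℝ) *
            fromBlocks H.toBlocks₁₁ H.toBlocks₁₂ H.toBlocks₁₂ᵀ H.toBlocks₂₂ *
            (fromBlocks (-C) (1 - D) 0 (1 : Matrix (Fin m) (Fin m) ℝ))ᵀ := by
        rw [hblk]
        generalize fromBlocks (-C) (1 - D) 0 (1 : Matrix (Fin m) (Fin m) ℝ) = G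
        simp [transpose_mul, hHT, Matrix.mul_assoc]
      revert htr hWs
      generalize fromBlocks (-C) (1 - D) 0 (1 : Matrix (Fin m) (Fin m) ℝ) *
            fromBlocks H.toBlocks₁₁ H.toBlocks₁₂ H.toBlocks₁₂ᵀ H.toBlocks₂₂ *
            (fromBlocks (-C) (1 - D) 0 (1 : Matrix (Fin m) (Fin m) ℝ))ᵀ = W
      intro htr hWs
      have hR : ∀ R ∈ Rset m, 0 ≤ (W * R).trace := fun R hR => by
        refine slope_nonneg_aux (a := ((A * H.toBlocks₁₁ + B * H.toBlocks₁₂ᵀ +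
          (A * H.toBlocks₁₁ + B * H.toBlocks₁₂ᵀ)ᵀ) * 1).trace) fun t ht => ?_
        have := htr 1 (t • R) Matrix.PosDef.one (Rset_smul hR ht.le)
        rwa [Matrix.mul_smul W, Matrix.trace_smul, smul_eq_mul] at this
      have hJ : ∀ d : Fin m → ℝ, 0 ≤ 2 * ∑ i, W (Sum.inl i) (Sum.inr i) * d i := fun d => by
        rw [← trace_calJ W hWs d]
        exact hR _ ⟨0, diagonal d, isDiag_diagonal d, by simp [Matrix.IsSymm], by simp, by simp⟩
      constructor
      · intro i j
        have h1 := hR (single i j 1 + single j i 1) ⟨single i j 1 + single j i 1, 0,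
          isDiag_zero, by simp [Matrix.IsSymm, add_comm], fun k l => by
            simp only [Matrix.add_apply, Matrix.single_apply]
            positivity, by simp [calJ]⟩
        have hs : W j i = W i j := by
          conv_lhs => rw [← hWs]
          rfl
        rw [mul_add, Matrix.trace_add, Matrix.trace_mul_single, Matrix.trace_mul_single] at h1
        simp [hs] at h1
        linarith
      · intro i
        have h1 := hJ (Pi.single i 1)
        have h2 := hJ (Pi.single i (-1))
        simp [Pi.single_apply] at h1 h2
        linarith
  · rintro ⟨H11, H12, H22, hH, hH0, hX, hW, hd⟩ ⟨P, Pi, hP, ⟨Q, J, hJ, hQ, hp, rfl⟩, hpd⟩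
    rw [Lmat_eq] at hpd
    have hHT : (fromBlocks H11 H12 H12ᵀ H22)ᵀ = fromBlocks H11 H12 H12ᵀ H22 := by
      have := hH.isHermitian
      rwa [Matrix.IsHermitian, conjTranspose_eq_transpose_of_trivial] at this
    have h11 : H11ᵀ = H11 := by
      rw [fromBlocks_transpose] at hHT
      exact (fromBlocks_inj.mp hHT).1
    have h1 := trace_mul_pos_aux hH hH0 hpd
    rw [Matrix.mul_neg, Matrix.trace_neg, trace_Lmat A B C D _ _ _ _ _ h11] at h1
    have h2 := trace_mul_nonneg_aux hX hP
    simp only [← G_block C D H11 H12 H22] at hd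
    have hWs : (fromBlocks (-C) (1 - D) 0 (1 : Matrix (Fin m) (Fin m) ℝ) *
          fromBlocks H11 H12 H12ᵀ H22 *
          (fromBlocks (-C) (1 - D) 0 (1 : Matrix (Fin m) (Fin m) ℝ))ᵀ)ᵀ =
          fromBlocks (-C) (1 - D) 0 (1 : Matrix (Fin m) (Fin m) ℝ) *
          fromBlocks H11 H12 H12ᵀ H22 *
          (fromBlocks (-C) (1 - D) 0 (1 : Matrix (Fin m) (Fin m) ℝ))ᵀ := by
      generalize fromBlocks (-C) (1 - D) 0 (1 : Matrix (Fin m) (Fin m) ℝ) = G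
      rw [transpose_mul, transpose_mul, hHT, transpose_transpose, Matrix.mul_assoc]
    revert h1 hW hd hWs
    generalize fromBlocks (-C) (1 - D) 0 (1 : Matrix (Fin m) (Fin m) ℝ) *
          fromBlocks H11 H12 H12ᵀ H22 *
          (fromBlocks (-C) (1 - D) 0 (1 : Matrix (Fin m) (Fin m) ℝ))ᵀ = W
    intro hW h1 hd hWs
    have h3 : 0 ≤ (W * Q).trace := by
      refine Finset.sum_nonneg fun i _ => ?_
      rw [Matrix.diag_apply, Matrix.mul_apply]
      exact Finset.sum_nonneg fun j _ => mul_nonneg (hW i j) (hp j i)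
    have h4 : (W * calJ J).trace = 0 := by
      rw [← hJ.diagonal_diag, trace_calJ W hWs]
      simp [hd]
    rw [mul_add W, Matrix.trace_add, h4] at h1
    linarith
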